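/- Let Z : Ω → ℝ^{d_z} be a measurable random variable on a probability space (Ω, P), let D_x be a set, let α ∈ (0,1), let T be a positive natural number, and let f : D_x × ℝ^{d_z} → ℝ and, for each t ∈ {1,…,T}, functions l_{t−1}, u_{t−1} : D_x × ℝ^{d_z} → ℝ be such that all of the maps z ↦ f(x,z), z ↦ l_{t−1}(x,z), z ↦ u_{t−1}(x,z) are Borel measurable for every x ∈ D_x, and l_{t−1}(x,z) ≤ f(x,z) ≤ u_{t−1}(x,z) for all t, x, z. For each t ∈ {1,…,T} let x_t ∈ D_x satisfy VaR_α(u_{t−1}(x, Z)) ≤ VaR_α(u_{t−1}(x_t, Z)) for all x ∈ D_x, and let z_t ∈ ℝ^{d_z} be a lacing value with respect to x_t at time t, i.e., l_{t−1}(x_t, z_t) ≤ VaR_α(l_{t−1}(x_t, Z)) and VaR_α(u_{t−1}(x_t, Z)) ≤ u_{t−1}(x_t, z_t). Let t* ∈ {1,…,T} satisfy VaR_α(l_{t−1}(x_t, Z)) ≤ VaR_α(l_{t*−1}(x_{t*}, Z)) for all t ∈ {1,…,T}, and let x* ∈ D_x be arbitrary. Then the regret of the recommendation x_{t*} satisfies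 VaR_α(f(x*, Z)) − VaR_α(f(x_{t*}, Z)) ≤ (1/T)·∑_{t=1}^{T} ( u_{t−1}(x_t, z_t) − l_{t−1}(x_t, z_t) ). -/

import Mathlib

open MeasureTheory Set Finset

/-- Value-at-risk of a real random variable `X` at level `α`. -/
noncomputable def VaR {Ω : Type*} [MeasurableSpace Ω] (P : Measure Ω)
    (X : Ω → ℝ) (α : ℝ) : ℝ :=
  sInf {w : ℝ | ENNReal.ofReal α ≤ P {ω | X ω ≤ w}}

/-!
Value-at-risk is monotone. So `f ≤ u t` and the choice of `x t` give
`VaR (f xstar) ≤ VaR (u t xstar) ≤ VaR (u t (x t))`, while `l tstar ≤ f` and the choice of `tstar`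
give `VaR (l t (x t)) ≤ VaR (l tstar (x tstar)) ≤ VaR (f (x tstar))`. The regret is therefore at
most `VaR (u t (x t)) - VaR (l t (x t))`, which the lacing value `z t` bounds by
`u t (x t) (z t) - l t (x t) (z t)`. This holds in every single round `t`, hence also on average.
-/

namespace VaR

variable {Ω : Type*} [MeasurableSpace Ω] {P : Measure Ω} {X Y : Ω → ℝ} {α : ℝ}

/-- The thresholds at which the distribution function of `X` is at least `α`. Their infimum is
`VaR P X α`, with junk value `0` when the set is empty or unbounded below. -/
def thresholds (P : Measure Ω) (X : Ω → ℝ) (α : ℝ) : Set ℝ :=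
  {w | ENNReal.ofReal α ≤ P {ω | X ω ≤ w}}

theorem thresholds_subset_of_ae_le (h : X ≤ᵐ[P] Y) : thresholds P Y α ⊆ thresholds P X α := by
  intro w hw
  have hsub : {ω | Y ω ≤ w} ≤ᵐ[P] {ω | X ω ≤ w} := by
    filter_upwards [h] with ω hω hY using hω.trans hY
  exact hw.trans (measure_mono_ae hsub)

theorem thresholds_nonempty (hα : ENNReal.ofReal α < P univ) : (thresholds P X α).Nonempty := by
  have hmono : Monotone fun w : ℝ => X ⁻¹' Iic w := monotone_preimage.comp monotone_Iic
  have hunion : ⋃ w : ℝ, X ⁻¹' Iic w = univ := by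
    rw [← preimage_iUnion, iUnion_Iic, Set.preimage_univ]
  have hlim := tendsto_measure_iUnion_atTop (μ := P) hmono
  rw [hunion] at hlim
  obtain ⟨w, hw⟩ := (hlim.eventually_const_lt hα).exists
  exact ⟨w, hw.le⟩

theorem bddBelow_thresholds [IsFiniteMeasure P] (hX : AEMeasurable X P) (hα : 0 < α) :
    BddBelow (thresholds P X α) := by
  have hmono : Monotone fun w : ℝ => X ⁻¹' Iic w := monotone_preimage.comp monotone_Iic
  have hinter : ⋂ w : ℝ, X ⁻¹' Iic w = ∅ := by
    have hbot : ⋂ w : ℝ, Iic w = ∅ :=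
      iInter_Iic_eq_empty_iff.2 (range_id' (α := ℝ) ▸ not_bddBelow_univ)
    rw [← preimage_iInter, hbot, Set.preimage_empty]
  have hlim := tendsto_measure_iInter_atBot (μ := P)
    (fun w => hX.nullMeasurable measurableSet_Iic) hmono ⟨0, measure_ne_top P _⟩
  rw [hinter, measure_empty] at hlim
  obtain ⟨b, hb⟩ := (hlim.eventually_lt_const (ENNReal.ofReal_pos.2 hα)).exists
  refine ⟨b, fun w hw => le_of_not_gt fun hwb => ?_⟩
  exact (hw.trans (measure_mono (hmono hwb.le))).not_gt hb

theorem mono_of_ae_le (hα : ENNReal.ofReal α < P univ) (hX : BddBelow (thresholds P X α))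
    (h : X ≤ᵐ[P] Y) : VaR P X α ≤ VaR P Y α :=
  csInf_le_csInf hX (thresholds_nonempty hα) (thresholds_subset_of_ae_le h)

end VaR

/-- A lacing value for bounding functions `l` and `u` at level `α`: a point at which `l` is at most
its value-at-risk and `u` at least its own. The decision and the time are fixed, so `l` and `u`
are functions of the random input alone. -/
structure IsLacingValue {Ω E : Type*} [MeasurableSpace Ω] (P : Measure Ω) (Z : Ω → E) (α : ℝ)
    (l u : E → ℝ) (z : E) : Prop where
  lower_le : l z ≤ VaR P (fun ω => l (Z ω)) α
  le_upper : VaR P (fun ω => u (Z ω)) α ≤ u z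

theorem stmt11_general {Ω E D ι : Type*} [MeasurableSpace Ω] {P : Measure Ω} [IsFiniteMeasure P]
    (Z : Ω → E) {α : ℝ} (hα₀ : 0 < α) (hα : ENNReal.ofReal α < P univ)
    {S : Set ι} {f : D → E → ℝ} {l u : ι → D → E → ℝ}
    (hl : ∀ t ∈ S, ∀ x, AEMeasurable (fun ω => l t x (Z ω)) P)
    (hlf : ∀ t ∈ S, ∀ x, ∀ᵐ ω ∂P, l t x (Z ω) ≤ f x (Z ω))
    (hfu : ∀ t ∈ S, ∀ x, ∀ᵐ ω ∂P, f x (Z ω) ≤ u t x (Z ω))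
    {x : ι → D} {z : ι → E}
    (hx : ∀ t ∈ S, ∀ x', VaR P (fun ω => u t x' (Z ω)) α ≤ VaR P (fun ω => u t (x t) (Z ω)) α)
    (hz : ∀ t ∈ S, IsLacingValue P Z α (l t (x t)) (u t (x t)) (z t))
    {tstar : ι} (htstar : tstar ∈ S)
    (htstar_max : ∀ t ∈ S,
      VaR P (fun ω => l t (x t) (Z ω)) α ≤ VaR P (fun ω => l tstar (x tstar) (Z ω)) α)
    (xstar : D) {t : ι} (ht : t ∈ S) :
    VaR P (fun ω => f xstar (Z ω)) α - VaR P (fun ω => f (x tstar) (Z ω)) α ≤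
      u t (x t) (z t) - l t (x t) (z t) := by
  have hf_bdd : BddBelow (VaR.thresholds P (fun ω => f xstar (Z ω)) α) :=
    (VaR.bddBelow_thresholds (hl t ht xstar) hα₀).mono
      (VaR.thresholds_subset_of_ae_le (hlf t ht xstar))
  have hupper : VaR P (fun ω => f xstar (Z ω)) α ≤ u t (x t) (z t) :=
    calc
      _ ≤ VaR P (fun ω => u t xstar (Z ω)) α := VaR.mono_of_ae_le hα hf_bdd (hfu t ht xstar)
      _ ≤ VaR P (fun ω => u t (x t) (Z ω)) α := hx t ht xstar
      _ ≤ u t (x t) (z t) := (hz t ht).le_upper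
  have hlower : l t (x t) (z t) ≤ VaR P (fun ω => f (x tstar) (Z ω)) α :=
    calc
      _ ≤ VaR P (fun ω => l t (x t) (Z ω)) α := (hz t ht).lower_le
      _ ≤ VaR P (fun ω => l tstar (x tstar) (Z ω)) α := htstar_max t ht
      _ ≤ VaR P (fun ω => f (x tstar) (Z ω)) α :=
        VaR.mono_of_ae_le hα (VaR.bddBelow_thresholds (hl tstar htstar _) hα₀)
          (hlf tstar htstar _)
  exact sub_le_sub hupper hlower

theorem stmt11 {Ω : Type*} [MeasurableSpace Ω] (P : Measure Ω)
    [IsProbabilityMeasure P] {dz : ℕ} (Z : Ω → (Fin dz → ℝ)) (hZ : Measurable Z)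
    {Dx : Type*} (α : ℝ) (hα : α ∈ Set.Ioo (0 : ℝ) 1)
    (T : ℕ) (hT : 0 < T)
    (f : Dx → (Fin dz → ℝ) → ℝ)
    (l u : ℕ → Dx → (Fin dz → ℝ) → ℝ)
    (hf : ∀ x : Dx, Measurable (f x))
    (hl : ∀ t ∈ Finset.Icc 1 T, ∀ x : Dx, Measurable (l t x))
    (hu : ∀ t ∈ Finset.Icc 1 T, ∀ x : Dx, Measurable (u t x))
    (hlf : ∀ t ∈ Finset.Icc 1 T, ∀ (x : Dx) (z : Fin dz → ℝ), l t x z ≤ f x z)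
    (hfu : ∀ t ∈ Finset.Icc 1 T, ∀ (x : Dx) (z : Fin dz → ℝ), f x z ≤ u t x z)
    (x : ℕ → Dx) (z : ℕ → (Fin dz → ℝ))
    (hx : ∀ t ∈ Finset.Icc 1 T, ∀ x' : Dx,
      VaR P (fun ω => u t x' (Z ω)) α ≤ VaR P (fun ω => u t (x t) (Z ω)) α)
    (hz_l : ∀ t ∈ Finset.Icc 1 T,
      l t (x t) (z t) ≤ VaR P (fun ω => l t (x t) (Z ω)) α)
    (hz_u : ∀ t ∈ Finset.Icc 1 T,
      VaR P (fun ω => u t (x t) (Z ω)) α ≤ u t (x t) (z t))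
    (tstar : ℕ) (htstar : tstar ∈ Finset.Icc 1 T)
    (htstar_max : ∀ t ∈ Finset.Icc 1 T,
      VaR P (fun ω => l t (x t) (Z ω)) α ≤ VaR P (fun ω => l tstar (x tstar) (Z ω)) α)
    (xstar : Dx) :
    VaR P (fun ω => f xstar (Z ω)) α - VaR P (fun ω => f (x tstar) (Z ω)) α ≤
      (1 / (T : ℝ)) * ∑ t ∈ Finset.Icc 1 T, (u t (x t) (z t) - l t (x t) (z t)) := by
  simpa [Finset.expect_eq_sum_div_card, div_eq_inv_mul] using
    Finset.le_expect (Finset.nonempty_Icc.2 hT) fun t ht =>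
      stmt11_general Z (S := {t | t ∈ Finset.Icc 1 T}) hα.1 (by simpa using hα.2)
        (fun t ht x => ((hl t ht x).comp hZ).aemeasurable)
        (fun t ht x => .of_forall fun ω => hlf t ht x (Z ω))
        (fun t ht x => .of_forall fun ω => hfu t ht x (Z ω))
        hx (fun t ht => ⟨hz_l t ht, hz_u t ht⟩) htstar htstar_max xstar ht
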